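/- Let A be a unital Banach algebra, H a complex Hilbert space, and Φ : A → B(H) a bounded unital algebra homomorphism with operator norm K. Suppose that for every f ∈ A with ‖f‖ ≤ 1 there exists g ∈ A with ‖g‖ ≤ 1 and ‖Φ(f) + Φ(g)*‖ ≤ 2. Then K ≤ 1 + √2. -/

import Mathlib

/-!
For `a = Φ f` and `b = Φ g`, write `a a⋆ a = a (a + b⋆)⋆ a - a b a`. The left side has norm
`‖a‖ ^ 3` by the C⋆-identity, while multiplicativity gives `a b a = Φ (f g f)`, which has norm at
most `K = ‖Φ‖`. Hence `‖Φ f‖ ^ 3 ≤ 2 ‖Φ f‖ ^ 2 + K` on the unit ball; passing to the supremum,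
`K ^ 3 ≤ 2 K ^ 2 + K`, so `K ^ 2 ≤ 2 K + 1`.
-/

section CStarRing

variable {B : Type*} [NonUnitalNormedRing B] [StarRing B] [CStarRing B]

theorem norm_mul_star_mul_self_eq_pow_three (a : B) : ‖a * star a * a‖ = ‖a‖ ^ 3 := by
  apply le_antisymm
  · calc ‖a * star a * a‖ ≤ ‖a‖ * ‖star a‖ * ‖a‖ := norm_mul₃_le
      _ = ‖a‖ ^ 3 := by rw [norm_star]; ring
  · rcases (norm_nonneg a).eq_or_lt' with ha | ha
    · simp [ha]
    refine le_of_mul_le_mul_left ?_ ha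
    calc ‖a‖ * ‖a‖ ^ 3 = ‖star (star a * a) * (star a * a)‖ := by
          rw [CStarRing.norm_star_mul_self, CStarRing.norm_star_mul_self]; ring
      _ = ‖star a * (a * star a * a)‖ := by simp only [star_mul, star_star, mul_assoc]
      _ ≤ ‖star a‖ * ‖a * star a * a‖ := norm_mul_le _ _
      _ = ‖a‖ * ‖a * star a * a‖ := by rw [norm_star]

theorem norm_pow_three_le_norm_add_star_mul_add (a b : B) :
    ‖a‖ ^ 3 ≤ ‖a + star b‖ * ‖a‖ ^ 2 + ‖a * b * a‖ := by
  have expand : a * star a * a = a * star (a + star b) * a - a * b * a := by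
    rw [star_add, star_star, mul_add, add_mul, add_sub_cancel_right]
  calc ‖a‖ ^ 3 = ‖a * star (a + star b) * a - a * b * a‖ := by
        rw [← expand, norm_mul_star_mul_self_eq_pow_three]
    _ ≤ ‖a * star (a + star b) * a‖ + ‖a * b * a‖ := norm_sub_le _ _
    _ ≤ ‖a‖ * ‖star (a + star b)‖ * ‖a‖ + ‖a * b * a‖ := by gcongr; exact norm_mul₃_le
    _ = ‖a + star b‖ * ‖a‖ ^ 2 + ‖a * b * a‖ := by rw [norm_star]; ring

end CStarRing

theorem opNorm_pow_le_of_forall_norm_lt_one {𝕜 E F : Type*} [DenselyNormedField 𝕜]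
    [NormedAddCommGroup E] [SeminormedAddCommGroup F] [NormedSpace 𝕜 E] [NormedSpace 𝕜 F]
    (T : E →L[𝕜] F) {n : ℕ} {M : ℝ} (hT : ∀ x, ‖x‖ < 1 → ‖T x‖ ^ n ≤ M) : ‖T‖ ^ n ≤ M := by
  rcases (norm_nonneg T).eq_or_lt' with hT₀ | hT₀
  · simpa [hT₀] using hT 0 (by simp)
  have pow_le_of_lt : ∀ r ∈ Set.Ioo 0 ‖T‖, r ^ n ≤ M := by
    intro r hr
    obtain ⟨x, hx, hrx⟩ := T.exists_lt_apply_of_lt_opNorm hr.2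
    exact (pow_le_pow_left₀ hr.1.le hrx.le n).trans (hT x hx)
  have tendsto_pow : Filter.Tendsto (fun r : ℝ ↦ r ^ n) (nhdsWithin ‖T‖ (Set.Iio ‖T‖))
      (nhds (‖T‖ ^ n)) := (continuous_pow n).continuousWithinAt
  exact le_of_tendsto tendsto_pow (Filter.mem_of_superset (Ioo_mem_nhdsLT hT₀) pow_le_of_lt)

theorem norm_map_pow_three_le {𝕜 A B : Type*} [NontriviallyNormedField 𝕜]
    [NonUnitalSeminormedRing A] [NormedSpace 𝕜 A]
    [NonUnitalNormedRing B] [StarRing B] [CStarRing B] [NormedSpace 𝕜 B]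
    (Φ : A →L[𝕜] B) (hmul : ∀ a b, Φ (a * b) = Φ a * Φ b) {f g : A}
    (hf : ‖f‖ ≤ 1) (hg : ‖g‖ ≤ 1) :
    ‖Φ f‖ ^ 3 ≤ ‖Φ f + star (Φ g)‖ * ‖Φ f‖ ^ 2 + ‖Φ‖ := by
  have norm_fgf_le : ‖f * g * f‖ ≤ 1 :=
    calc ‖f * g * f‖ ≤ ‖f‖ * ‖g‖ * ‖f‖ := norm_mul₃_le
      _ ≤ 1 * 1 * 1 := by gcongr
      _ = 1 := by norm_num
  calc ‖Φ f‖ ^ 3 ≤ ‖Φ f + star (Φ g)‖ * ‖Φ f‖ ^ 2 + ‖Φ f * Φ g * Φ f‖ :=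
        norm_pow_three_le_norm_add_star_mul_add _ _
    _ ≤ ‖Φ f + star (Φ g)‖ * ‖Φ f‖ ^ 2 + ‖Φ‖ := by
        rw [← hmul, ← hmul]
        gcongr
        exact Φ.unit_le_opNorm _ norm_fgf_le

section MultiplicativeMap

variable {𝕜 A B : Type*} [DenselyNormedField 𝕜] [NonUnitalNormedRing A] [NormedSpace 𝕜 A]
  [NonUnitalNormedRing B] [StarRing B] [CStarRing B] [NormedSpace 𝕜 B]

theorem opNorm_sq_le_of_forall_exists_norm_add_star_le (Φ : A →L[𝕜] B)
    (hmul : ∀ a b, Φ (a * b) = Φ a * Φ b) {c : ℝ}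
    (h : ∀ f : A, ‖f‖ ≤ 1 → ∃ g : A, ‖g‖ ≤ 1 ∧ ‖Φ f + star (Φ g)‖ ≤ c) :
    ‖Φ‖ ^ 2 ≤ c * ‖Φ‖ + 1 := by
  have cube_le : ‖Φ‖ ^ 3 ≤ c * ‖Φ‖ ^ 2 + ‖Φ‖ := by
    refine opNorm_pow_le_of_forall_norm_lt_one Φ fun f hf ↦ ?_
    obtain ⟨g, hg, hfg⟩ := h f hf.le
    have hc : 0 ≤ c := (norm_nonneg _).trans hfg
    calc ‖Φ f‖ ^ 3 ≤ ‖Φ f + star (Φ g)‖ * ‖Φ f‖ ^ 2 + ‖Φ‖ :=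
          norm_map_pow_three_le Φ hmul hf.le hg
      _ ≤ c * ‖Φ‖ ^ 2 + ‖Φ‖ := by gcongr; exact Φ.unit_le_opNorm f hf.le
  rcases (norm_nonneg Φ).eq_or_lt' with hΦ | hΦ
  · simp [hΦ]
  · exact le_of_mul_le_mul_left (by linarith) hΦ

theorem stmt_1_general (Φ : A →L[𝕜] B) (hmul : ∀ a b, Φ (a * b) = Φ a * Φ b)
    (h : ∀ f : A, ‖f‖ ≤ 1 → ∃ g : A, ‖g‖ ≤ 1 ∧ ‖Φ f + star (Φ g)‖ ≤ 2) :
    ‖Φ‖ ≤ 1 + Real.sqrt 2 := by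
  have sq_le : ‖Φ‖ ^ 2 ≤ 2 * ‖Φ‖ + 1 := opNorm_sq_le_of_forall_exists_norm_add_star_le Φ hmul h
  have sub_one_le : ‖Φ‖ - 1 ≤ Real.sqrt 2 := Real.le_sqrt_of_sq_le (by linarith)
  linarith

end MultiplicativeMap

theorem stmt_1 {A : Type*} [NormedRing A] [NormedAlgebra ℂ A] [NormOneClass A]
    {H : Type*} [NormedAddCommGroup H] [InnerProductSpace ℂ H] [CompleteSpace H]
    (Φ : A →L[ℂ] (H →L[ℂ] H))
    (hmul : ∀ a b : A, Φ (a * b) = Φ a * Φ b)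
    (hone : Φ 1 = 1)
    (h : ∀ f : A, ‖f‖ ≤ 1 → ∃ g : A, ‖g‖ ≤ 1 ∧
      ‖Φ f + ContinuousLinearMap.adjoint (Φ g)‖ ≤ 2) :
    ‖Φ‖ ≤ 1 + Real.sqrt 2 :=
  stmt_1_general Φ hmul h
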